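/- arXiv:1509.04900 — 2 statements merged into one kernel-verified Lean document; each statement's English description precedes it below -/
import Mathlib

section
/- The Hausdorff dimensions satisfy dim_H(U_2) = dim_H(U_1 ∩ (U_1 + (1 − λ))), where U_1 + (1 − λ) = {u + 1 − λ : u ∈ U_1}. -/
open Filter Topology

/-- `codingApprox f i n = f (i 0) (f (i 1) (⋯ (f (i (n-1)) 0)))`, i.e. the `n`-th
approximation `f_{i_1} ∘ ⋯ ∘ f_{i_n} (0)` of the point coded by `i`. -/
noncomputable def codingApprox (f : Fin 4 → ℝ → ℝ) : (ℕ → Fin 4) → ℕ → ℝ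
  | _, 0 => 0
  | i, n + 1 => f (i 0) (codingApprox f (fun k => i (k + 1)) n)

/-- The set of codings of `x` for the IFS `f`. -/
def codings (f : Fin 4 → ℝ → ℝ) (x : ℝ) : Set (ℕ → Fin 4) :=
  {i | Tendsto (codingApprox f i) atTop (𝓝 x)}

/-!
Let `x` have exactly two codings. Deleting their common prefix exhibits `x` as the image of a point
`y`, still with exactly two codings, whose codings differ in the first digit. For
`λ < (5 - √21) / 2` the only first-level intervals that meet are the two middle ones, so
`y = f₂ a = f₃ b`, and the codings of `y` are those of `a` prefixed by `2` together with those of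
`b` prefixed by `3`; hence `a` and `b` both have a unique coding. Conversely every point of
`f₂(U₁) ∩ f₃(U₁)` has exactly two codings. As there are only countably many prefixes and the maps
are Lipschitz, `U₂` and `f₂(U₁) ∩ f₃(U₁)` have the same dimension. Finally
`f₃ b = f₂ (b + (1 - λ))`, so this intersection is the similar copy `f₂(U₁ ∩ (U₁ + (1 - λ)))`.

The digits `1, 2, 3, 4` are the elements `0, 1, 2, 3` of `Fin 4` below.
-/

open Set

/-- The coding with first digit `d` followed by the digits of `i`; it codes the image under `f d`
of the point coded by `i`. -/
def prepend (d : Fin 4) (i : ℕ → Fin 4) : ℕ → Fin 4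
  | 0 => d
  | n + 1 => i n

theorem prepend_tail (i : ℕ → Fin 4) : prepend (i 0) (fun n => i (n + 1)) = i :=
  funext fun n => by cases n <;> rfl

theorem prepend_injective (d : Fin 4) : Function.Injective (prepend d) :=
  fun _ _ h => funext fun n => congrFun h (n + 1)

/-- The set `U_k` of points with exactly `k` codings. The attractor is not mentioned: for `k ≠ 0`
these points lie in it automatically, see `exactCodings_subset`. -/
def exactCodings (f : Fin 4 → ℝ → ℝ) (k : ℕ∞) : Set ℝ :=
  {x | (codings f x).encard = k}

/-- The IFS `f` has overlaps only between the first-level pieces with digits `p` and `q`. It is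
enough to constrain the first digit of `i`, since the condition is symmetric in `i` and `j`. -/
def OverlapsOnlyAt (f : Fin 4 → ℝ → ℝ) (p q : Fin 4) : Prop :=
  ∀ ⦃x i j⦄, i ∈ codings f x → j ∈ codings f x → i 0 ≠ j 0 → i 0 = p ∨ i 0 = q

theorem eq_one_and_eq_one_of_add_eq_two {m n : ℕ∞} (hm : 1 ≤ m) (hn : 1 ≤ n) (h : m + n = 2) :
    m = 1 ∧ n = 1 := by
  lift m to ℕ using fun hm' => by simp [hm'] at h
  lift n to ℕ using fun hn' => by simp [hn'] at h
  norm_cast at *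
  omega

section Codings

variable {f : Fin 4 → ℝ → ℝ} {p q d : Fin 4} {i j : ℕ → Fin 4} {x y a b : ℝ} {K : Set ℝ}

theorem prepend_mem_codings_iff (hf : IsInducing (f d)) :
    prepend d i ∈ codings f (f d y) ↔ i ∈ codings f y := by
  change Tendsto (codingApprox f (prepend d i)) atTop (𝓝 (f d y)) ↔ _
  rw [← tendsto_add_atTop_iff_nat 1]
  exact hf.tendsto_nhds_iff.symm

theorem mem_codings_iff_tail (hf : IsInducing (f (i 0))) :
    i ∈ codings f (f (i 0) y) ↔ (fun n => i (n + 1)) ∈ codings f y := by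
  rw [← prepend_mem_codings_iff hf (i := fun n => i (n + 1)), prepend_tail]

theorem codings_inter_head_eq (hf : IsInducing (f d)) :
    codings f (f d y) ∩ {i | i 0 = d} = prepend d '' codings f y := by
  apply Subset.antisymm
  · rintro i ⟨hi, rfl⟩
    exact ⟨_, (mem_codings_iff_tail hf).1 hi, prepend_tail i⟩
  · rintro _ ⟨i, hi, rfl⟩
    exact ⟨(prepend_mem_codings_iff hf).2 hi, rfl⟩

theorem encard_prepend_image (d : Fin 4) (s : Set (ℕ → Fin 4)) :
    (prepend d '' s).encard = s.encard :=
  (prepend_injective d).encard_image s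

theorem encard_codings_eq_of_forall_head_eq (hf : IsInducing (f d))
    (hd : ∀ i ∈ codings f (f d y), i 0 = d) :
    (codings f (f d y)).encard = (codings f y).encard := by
  have hhead : codings f (f d y) ∩ {i | i 0 = d} = codings f (f d y) := inter_eq_left.2 hd
  rw [← hhead, codings_inter_head_eq hf, encard_prepend_image]

theorem OverlapsOnlyAt.codings_eq_union (hpq : OverlapsOnlyAt f p q)
    (hf : ∀ d, IsInducing (f d)) (hab : f p a = f q b) (ha : (codings f a).Nonempty) :
    codings f (f p a) = prepend p '' codings f a ∪ prepend q '' codings f b := by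
  obtain ⟨k, hk⟩ := ha
  have hpk : prepend p k ∈ codings f (f p a) := (prepend_mem_codings_iff (hf p)).2 hk
  have head_eq_or : ∀ i ∈ codings f (f p a), i 0 = p ∨ i 0 = q := fun i hi =>
    or_iff_not_imp_left.2 fun hip => (hpq hi hpk hip).resolve_left hip
  rw [← codings_inter_head_eq (hf p), ← codings_inter_head_eq (hf q), ← hab,
    ← inter_union_distrib_left]
  exact (inter_eq_left.2 head_eq_or).symm

theorem OverlapsOnlyAt.encard_codings_eq_add (hpq : OverlapsOnlyAt f p q)
    (hf : ∀ d, IsInducing (f d)) (hne : p ≠ q) (hab : f p a = f q b)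
    (ha : (codings f a).Nonempty) :
    (codings f (f p a)).encard = (codings f a).encard + (codings f b).encard := by
  have disjoint_heads : Disjoint (prepend p '' codings f a) (prepend q '' codings f b) :=
    disjoint_image_image fun _ _ _ _ h => hne (congrFun h 0)
  rw [hpq.codings_eq_union hf hab ha, encard_union_eq disjoint_heads, encard_prepend_image,
    encard_prepend_image]

theorem OverlapsOnlyAt.image_inter_image_subset_exactCodings_two (hpq : OverlapsOnlyAt f p q)
    (hf : ∀ d, IsInducing (f d)) (hne : p ≠ q) :
    f p '' exactCodings f 1 ∩ f q '' exactCodings f 1 ⊆ exactCodings f 2 := by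
  rintro _ ⟨⟨a, ha : _ = _, rfl⟩, b, hb : _ = _, hba⟩
  have ha_ne : (codings f a).Nonempty := by
    rw [← encard_ne_zero, ha]
    exact one_ne_zero
  change _ = _
  rw [hpq.encard_codings_eq_add hf hne hba.symm ha_ne, ha, hb, one_add_one_eq_two]

theorem OverlapsOnlyAt.mem_image_inter_image_of_head_ne (hpq : OverlapsOnlyAt f p q)
    (hf : ∀ d, IsHomeomorph (f d)) (hx : x ∈ exactCodings f 2)
    (hi : i ∈ codings f x) (hj : j ∈ codings f x) (hij : i 0 ≠ j 0) :
    x ∈ f p '' exactCodings f 1 ∩ f q '' exactCodings f 1 := by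
  have hind d : IsInducing (f d) := (hf d).isInducing
  wlog hip : i 0 = p generalizing i j
  · have hiq := (hpq hi hj hij).resolve_left hip
    exact this hj hi hij.symm ((hpq hj hi hij.symm).resolve_right (hiq ▸ hij.symm))
  have hjq : j 0 = q := (hpq hj hi hij.symm).resolve_left (hip ▸ hij.symm)
  subst hip hjq
  obtain ⟨a, rfl⟩ := (hf (i 0)).surjective x
  obtain ⟨b, hb⟩ := (hf (j 0)).surjective (f (i 0) a)
  have ha : (codings f a).Nonempty := ⟨_, (mem_codings_iff_tail (hind _)).1 hi⟩
  have hb_ne : (codings f b).Nonempty := ⟨_, (mem_codings_iff_tail (hind _)).1 (hb ▸ hj)⟩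
  have hsum : (codings f a).encard + (codings f b).encard = 2 :=
    (hpq.encard_codings_eq_add hind hij hb.symm ha).symm.trans hx
  obtain ⟨ha_one, hb_one⟩ := eq_one_and_eq_one_of_add_eq_two
    (one_le_encard_iff_nonempty.2 ha) (one_le_encard_iff_nonempty.2 hb_ne) hsum
  exact ⟨⟨a, ha_one, rfl⟩, b, hb_one, hb⟩

theorem mem_exactCodings_two_of_head_eq (hf : IsInducing (f (i 0)))
    (hx : f (i 0) y ∈ exactCodings f 2) (hi : i ∈ codings f (f (i 0) y))
    (hj : j ∈ codings f (f (i 0) y)) (hij : i ≠ j) (hhead : i 0 = j 0) :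
    y ∈ exactCodings f 2 := by
  have hx2 : (codings f (f (i 0) y)).encard = 2 := hx
  have hpair : {i, j} = codings f (f (i 0) y) :=
    (toFinite {i, j}).eq_of_subset_of_encard_le
      (pair_subset hi hj) (by rw [hx2, encard_pair hij])
  have forall_head : ∀ k ∈ codings f (f (i 0) y), k 0 = i 0 := by
    rw [← hpair]
    rintro k (rfl | rfl)
    exacts [rfl, hhead.symm]
  exact (encard_codings_eq_of_forall_head_eq hf forall_head).symm.trans hx2

theorem OverlapsOnlyAt.exists_mem_foldr_image (hpq : OverlapsOnlyAt f p q)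
    (hf : ∀ d, IsHomeomorph (f d)) (hx : x ∈ exactCodings f 2) :
    ∃ w : List (Fin 4),
      x ∈ (fun y => w.foldr f y) '' (f p '' exactCodings f 1 ∩ f q '' exactCodings f 1) := by
  obtain ⟨i, j, hij, hcod⟩ := encard_eq_two.1 hx
  have hi : i ∈ codings f x := hcod ▸ mem_insert i {j}
  have hj : j ∈ codings f x := hcod ▸ mem_insert_of_mem i rfl
  clear hcod
  obtain ⟨n, hn⟩ := Function.ne_iff.1 hij
  induction n generalizing x i j with
  | zero => exact ⟨[], x, hpq.mem_image_inter_image_of_head_ne hf hx hi hj hn, rfl⟩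
  | succ n ih =>
    by_cases hhead : i 0 = j 0
    · obtain ⟨y, rfl⟩ := (hf (i 0)).surjective x
      have hy := mem_exactCodings_two_of_head_eq (hf _).isInducing hx hi hj hij hhead
      have hti := (mem_codings_iff_tail (hf _).isInducing).1 hi
      rw [hhead] at hj
      have htj := (mem_codings_iff_tail (hf _).isInducing).1 hj
      obtain ⟨w, z, hz, rfl⟩ := ih hy _ _ (fun h => hn (congrFun h n)) hti htj hn
      exact ⟨i 0 :: w, z, hz, rfl⟩
    · exact ⟨[], x, hpq.mem_image_inter_image_of_head_ne hf hx hi hj hhead, rfl⟩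

theorem dimH_foldr_image_le (hf : ∀ d, ∃ C, LipschitzWith C (f d)) (w : List (Fin 4))
    (s : Set ℝ) : dimH ((fun y => w.foldr f y) '' s) ≤ dimH s := by
  induction w with
  | nil => simp
  | cons d w ih =>
    obtain ⟨C, hC⟩ := hf d
    have himage : (fun y => (d :: w).foldr f y) '' s = f d '' ((fun y => w.foldr f y) '' s) :=
      (image_image (f d) _ s).symm
    exact himage ▸ (hC.dimH_image_le _).trans ih

theorem OverlapsOnlyAt.dimH_exactCodings_two (hpq : OverlapsOnlyAt f p q)
    (hf : ∀ d, IsHomeomorph (f d)) (hlip : ∀ d, ∃ C, LipschitzWith C (f d)) (hne : p ≠ q) :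
    dimH (exactCodings f 2) = dimH (f p '' exactCodings f 1 ∩ f q '' exactCodings f 1) := by
  apply le_antisymm
  · calc dimH (exactCodings f 2)
        ≤ dimH (⋃ w : List (Fin 4), (fun y => w.foldr f y) ''
            (f p '' exactCodings f 1 ∩ f q '' exactCodings f 1)) :=
          dimH_mono fun _ hx => mem_iUnion.2 (hpq.exists_mem_foldr_image hf hx)
      _ ≤ dimH (f p '' exactCodings f 1 ∩ f q '' exactCodings f 1) := by
          rw [dimH_iUnion]
          exact iSup_le fun w => dimH_foldr_image_le hlip w _
  · exact dimH_mono (hpq.image_inter_image_subset_exactCodings_two (fun d => (hf d).isInducing) hne)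

theorem mem_of_mem_codings (hK : IsClosed K) (h0 : 0 ∈ K) (hmaps : ∀ d, MapsTo (f d) K K)
    (hi : i ∈ codings f x) : x ∈ K := by
  have happrox : ∀ n i, codingApprox f i n ∈ K := by
    intro n
    induction n with
    | zero => exact fun _ => h0
    | succ n ih => exact fun i => hmaps (i 0) (ih _)
  exact hK.mem_of_tendsto hi (Eventually.of_forall fun n => happrox n i)

theorem exactCodings_subset (hK : IsClosed K) (h0 : 0 ∈ K) (hmaps : ∀ d, MapsTo (f d) K K)
    {k : ℕ∞} (hk : k ≠ 0) : exactCodings f k ⊆ K := by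
  rintro x rfl
  obtain ⟨i, hi⟩ := encard_ne_zero.1 hk
  exact mem_of_mem_codings hK h0 hmaps hi

theorem mem_image_head_of_mem_codings (hf : ∀ d, IsHomeomorph (f d)) (hK : IsClosed K)
    (h0 : 0 ∈ K) (hmaps : ∀ d, MapsTo (f d) K K) (hi : i ∈ codings f x) : x ∈ f (i 0) '' K := by
  obtain ⟨y, rfl⟩ := (hf (i 0)).surjective x
  exact ⟨y, mem_of_mem_codings hK h0 hmaps ((mem_codings_iff_tail (hf _).isInducing).1 hi), rfl⟩

end Codings

theorem zero_mem_of_mapsTo_const_mul {r : ℝ} {K : Set ℝ} (hr : |r| < 1) (hK : IsClosed K)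
    (hne : K.Nonempty) (hmaps : MapsTo (r * ·) K K) : 0 ∈ K := by
  obtain ⟨x, hx⟩ := hne
  have hlim : Tendsto (fun n : ℕ => r ^ n * x) atTop (𝓝 0) := by
    simpa only [zero_mul] using (tendsto_pow_atTop_nhds_zero_of_abs_lt_one hr).mul_const x
  refine hK.mem_of_tendsto hlim (Eventually.of_forall fun n => ?_)
  simpa only [mul_left_iterate] using hmaps.iterate n hx

theorem lipschitzWith_mul_add (r c : ℝ) : LipschitzWith ‖r‖₊ fun x : ℝ => r * x + c :=
  LipschitzWith.of_dist_le_mul fun x y => by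
    rw [dist_add_right, Real.dist_eq, ← mul_sub, abs_mul, coe_nnnorm,
      Real.norm_eq_abs, Real.dist_eq]

theorem dimH_image_mul_add {r : ℝ} (hr : r ≠ 0) (c : ℝ) (s : Set ℝ) :
    dimH ((fun x => r * x + c) '' s) = dimH s := by
  apply le_antisymm ((lipschitzWith_mul_add r c).dimH_image_le s)
  have hinv : (fun x => r⁻¹ * x + -(r⁻¹ * c)) '' ((fun x => r * x + c) '' s) = s := by
    simp [image_image, mul_add, hr]
  calc dimH s = dimH ((fun x => r⁻¹ * x + -(r⁻¹ * c)) '' ((fun x => r * x + c) '' s)) := by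
        rw [hinv]
    _ ≤ dimH ((fun x => r * x + c) '' s) := (lipschitzWith_mul_add _ _).dimH_image_le _

/-- The homogeneous affine IFS with maps `x ↦ r x + c d`. -/
def affineIFS (r : ℝ) (c : Fin 4 → ℝ) (d : Fin 4) (x : ℝ) : ℝ :=
  r * x + c d

namespace affineIFS

variable {r : ℝ} {c : Fin 4 → ℝ} {p q : Fin 4} {i j : ℕ → Fin 4} {x : ℝ}

theorem isHomeomorph (hr : r ≠ 0) (d : Fin 4) : IsHomeomorph (affineIFS r c d) :=
  (affineHomeomorph r (c d) hr).isHomeomorph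

theorem mapsTo_Icc (hr : 0 ≤ r) (hc : ∀ d, c d ∈ Icc 0 (1 - r)) (d : Fin 4) :
    MapsTo (affineIFS r c d) (Icc 0 1) (Icc 0 1) := by
  rintro x ⟨hx0, hx1⟩
  obtain ⟨hc0, hc1⟩ := hc d
  have hrx0 : 0 ≤ r * x := mul_nonneg hr hx0
  have hrx1 : r * x ≤ r := mul_le_of_le_one_right hr hx1
  constructor <;> unfold affineIFS <;> linarith

theorem abs_sub_head_le (hr : 0 < r) (hc : ∀ d, c d ∈ Icc 0 (1 - r))
    (hi : i ∈ codings (affineIFS r c) x) (hj : j ∈ codings (affineIFS r c) x) :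
    |c (i 0) - c (j 0)| ≤ r := by
  have bounds : ∀ k ∈ codings (affineIFS r c) x, x - c (k 0) ∈ Icc 0 r := by
    intro k hk
    obtain ⟨y, ⟨hy0, hy1⟩, rfl⟩ := mem_image_head_of_mem_codings (isHomeomorph hr.ne')
      isClosed_Icc (left_mem_Icc.2 zero_le_one) (mapsTo_Icc hr.le hc) hk
    rw [affineIFS, add_sub_cancel_right]
    exact ⟨mul_nonneg hr.le hy0, mul_le_of_le_one_right hr.le hy1⟩
  obtain ⟨hi0, hi1⟩ := bounds i hi
  obtain ⟨hj0, hj1⟩ := bounds j hj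
  rw [abs_le]
  constructor <;> linarith

theorem overlapsOnlyAt (hr : 0 < r) (hc : ∀ d, c d ∈ Icc 0 (1 - r))
    (hsep : ∀ d e, d ≠ e → |c d - c e| ≤ r → d = p ∨ d = q) :
    OverlapsOnlyAt (affineIFS r c) p q :=
  fun _ _ _ hi hj hij => hsep _ _ hij (abs_sub_head_le hr hc hi hj)

theorem image_inter_image (hr : r ≠ 0) (s : Set ℝ) :
    affineIFS r c p '' s ∩ affineIFS r c q '' s =
      affineIFS r c p '' (s ∩ (· + (c q - c p) / r) '' s) := by
  have hshift : affineIFS r c q = affineIFS r c p ∘ (· + (c q - c p) / r) := by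
    funext x
    simp only [affineIFS, Function.comp_apply]
    field_simp
    ring
  rw [image_inter (isHomeomorph hr p).injective, ← image_comp, ← hshift]

theorem dimH_exactCodings_two (hr : r ≠ 0) (hpq : OverlapsOnlyAt (affineIFS r c) p q)
    (hne : p ≠ q) :
    dimH (exactCodings (affineIFS r c) 2) =
      dimH (exactCodings (affineIFS r c) 1 ∩
        (· + (c q - c p) / r) '' exactCodings (affineIFS r c) 1) := by
  rw [hpq.dimH_exactCodings_two (isHomeomorph hr)
    (fun d => ⟨_, lipschitzWith_mul_add r (c d)⟩) hne, image_inter_image hr]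
  exact dimH_image_mul_add hr (c p) _

end affineIFS

/-- The translation parts of the four maps in the theorem. -/
def translations (r : ℝ) : Fin 4 → ℝ :=
  ![0, 2 * r, 3 * r - r ^ 2, 1 - r]

section Translations

variable {r : ℝ}

theorem affineIFS_translations_eq (r : ℝ) :
    affineIFS r (translations r) = ![fun x => r * x, fun x => r * x + 2 * r,
      fun x => r * x + 3 * r - r ^ 2, fun x => r * x + 1 - r] := by
  funext d x
  fin_cases d <;> simp [affineIFS, translations, add_sub_assoc]

theorem five_mul_lt_one_add_sq (hr : r < (5 - Real.sqrt 21) / 2) : 5 * r < 1 + r ^ 2 := by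
  have hsq : Real.sqrt 21 ^ 2 = 21 := Real.sq_sqrt (by norm_num)
  have hroot : Real.sqrt 21 < 5 - 2 * r := by linarith
  nlinarith [Real.sqrt_nonneg 21, hroot]

theorem translations_mem_Icc (hr : 0 < r) (hr1 : r < 1) (hgap : 5 * r < 1 + r ^ 2) (d : Fin 4) :
    translations r d ∈ Icc 0 (1 - r) := by
  constructor <;> fin_cases d <;>
    simp only [translations, Fin.zero_eta, Fin.mk_one, Fin.reduceFinMk, Matrix.cons_val] <;>
    nlinarith

theorem eq_one_or_eq_two_of_abs_translations_sub_le (hr : 0 < r) (hr1 : r < 1)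
    (hgap : 5 * r < 1 + r ^ 2) (d e : Fin 4) (hne : d ≠ e)
    (hde : |translations r d - translations r e| ≤ r) : d = 1 ∨ d = 2 := by
  rw [abs_le] at hde
  obtain ⟨hlo, hhi⟩ := hde
  fin_cases d <;> fin_cases e <;>
    simp only [translations, Fin.zero_eta, Fin.mk_one, Fin.reduceFinMk, Matrix.cons_val]
      at hlo hhi <;>
    first
    | exact absurd rfl hne
    | exact Or.inl rfl
    | exact Or.inr rfl
    | nlinarith

end Translations

/-- `dim_H (U_2) = dim_H (U_1 ∩ (U_1 + (1 - λ)))`. -/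
theorem statement9
    (lam : ℝ) (hlam : 0 < lam ∧ lam < (5 - Real.sqrt 21) / 2)
    (f : Fin 4 → ℝ → ℝ)
    (hf : f = ![fun x => lam * x, fun x => lam * x + 2 * lam,
      fun x => lam * x + 3 * lam - lam ^ 2, fun x => lam * x + 1 - lam])
    (K : Set ℝ) (hKne : K.Nonempty) (hKcpt : IsCompact K)
    (hK : K = f 0 '' K ∪ f 1 '' K ∪ f 2 '' K ∪ f 3 '' K)
    (U : ℕ → Set ℝ)
    (hU : ∀ k : ℕ, U k = {x ∈ K | (codings f x).encard = (k : ℕ∞)})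
    :
    dimH (U 2) = dimH (U 1 ∩ (fun u => u + (1 - lam)) '' U 1) := by
  obtain ⟨hpos, hlt⟩ := hlam
  have hgap : 5 * lam < 1 + lam ^ 2 := five_mul_lt_one_add_sq hlt
  have hlam1 : lam < 1 := by linarith [Real.lt_sqrt_of_sq_lt (show (3 : ℝ) ^ 2 < 21 by norm_num)]
  have hmaps : ∀ d, MapsTo (f d) K K := by
    intro d x hx
    rw [hK]
    fin_cases d <;> simp [mem_image_of_mem _ hx]
  have h0 : 0 ∈ K := zero_mem_of_mapsTo_const_mul (abs_lt.2 ⟨by linarith, hlam1⟩)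
    hKcpt.isClosed hKne (by simpa [hf] using hmaps 0)
  have hU_eq : ∀ k : ℕ, k ≠ 0 → U k = exactCodings f k := fun k hk =>
    (hU k).trans (inter_eq_right.2
      (exactCodings_subset hKcpt.isClosed h0 hmaps (Nat.cast_ne_zero.2 hk)))
  have hshift : (translations lam 2 - translations lam 1) / lam = 1 - lam := by
    simp only [translations, Matrix.cons_val]
    field_simp
    ring
  have hoverlap : OverlapsOnlyAt (affineIFS lam (translations lam)) 1 2 :=
    affineIFS.overlapsOnlyAt hpos (translations_mem_Icc hpos hlam1 hgap)
      (eq_one_or_eq_two_of_abs_translations_sub_le hpos hlam1 hgap)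
  have hdim := affineIFS.dimH_exactCodings_two hpos.ne' hoverlap (by decide)
  rw [hshift, affineIFS_translations_eq, ← hf] at hdim
  rw [hU_eq 1 one_ne_zero, hU_eq 2 two_ne_zero]
  exact hdim
end

section
/- For every integer i ≥ 1, U_{2i+1} = ∅, i.e. no point of K has exactly 2i+1 distinct codings. -/
open Filter Topology

/-!
The first-level intervals `f_a([0, 1])` are pairwise disjoint, except that `f_2([0, 1])` and
`f_3([0, 1])` share exactly `f_2 f_4([0, 1]) = f_3 f_1([0, 1])`, where `f_2 f_4 = f_3 f_1`.
If a point has several codings, strip the common prefix of all of them: this preserves the number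
of codings and leaves a point of the overlap, `f_2 f_4(w) = f_3 f_1(w)`. Each of its codings then
starts with `24` or with `31` and continues with an arbitrary coding of `w`, so their number is
twice that of `w`.
Digits are numbered from `0` below, so `f_a` is `f (a - 1)`.
-/

section Codings

/-- The coding `i` preceded by the digit `a`; on points this is the action of the `a`-th map. -/
def prependDigit (a : Fin 4) (i : ℕ → Fin 4) : ℕ → Fin 4
  | 0 => a
  | n + 1 => i n

theorem prependDigit_injective (a : Fin 4) : Function.Injective (prependDigit a) :=
  fun _ _ h => funext fun n => congrFun h (n + 1)

theorem prependDigit_head_tail (i : ℕ → Fin 4) :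
    prependDigit (i 0) (fun n => i (n + 1)) = i := by
  funext n
  cases n <;> rfl

variable {f : Fin 4 → ℝ → ℝ}

theorem prependDigit_mem_codings_iff {a : Fin 4} (hf : IsInducing (f a)) {i : ℕ → Fin 4} {y : ℝ} :
    prependDigit a i ∈ codings f (f a y) ↔ i ∈ codings f y := by
  have approx_succ : (fun n => codingApprox f (prependDigit a i) (n + 1)) =
      f a ∘ codingApprox f i := rfl
  change Tendsto _ _ _ ↔ Tendsto _ _ _
  rw [← tendsto_add_atTop_iff_nat 1, approx_succ, ← hf.tendsto_nhds_iff]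

theorem setOf_mem_codings_head_eq {a : Fin 4} (hf : IsInducing (f a)) (y : ℝ) :
    {i ∈ codings f (f a y) | i 0 = a} = prependDigit a '' codings f y := by
  ext i
  constructor
  · rintro ⟨hi, rfl⟩
    rw [← prependDigit_head_tail i] at hi
    exact ⟨_, (prependDigit_mem_codings_iff hf).1 hi, prependDigit_head_tail i⟩
  · rintro ⟨j, hj, rfl⟩
    exact ⟨(prependDigit_mem_codings_iff hf).2 hj, rfl⟩

theorem encard_codings_head_eq {a : Fin 4} (hf : IsInducing (f a)) (y : ℝ) :
    {i ∈ codings f (f a y) | i 0 = a}.encard = (codings f y).encard := by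
  rw [setOf_mem_codings_head_eq hf, (prependDigit_injective a).encard_image]

theorem encard_codings_apply_of_forall_head_eq {a : Fin 4} (hf : IsInducing (f a)) {y : ℝ}
    (hhead : ∀ i ∈ codings f (f a y), i 0 = a) :
    (codings f (f a y)).encard = (codings f y).encard := by
  rw [← encard_codings_head_eq hf y, Set.sep_eq_self_iff_mem_true.2 hhead]

theorem exists_tail_mem_codings (hf : ∀ a, IsClosedEmbedding (f a)) {i : ℕ → Fin 4} {x : ℝ}
    (hi : i ∈ codings f x) : ∃ y, f (i 0) y = x ∧ (fun n => i (n + 1)) ∈ codings f y := by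
  have approx_mem_range : ∀ n, codingApprox f i (n + 1) ∈ Set.range (f (i 0)) :=
    fun n => Set.mem_range_self _
  obtain ⟨y, rfl⟩ := (hf (i 0)).isClosed_range.mem_of_tendsto
    ((tendsto_add_atTop_iff_nat 1).2 hi) (.of_forall approx_mem_range)
  rw [← prependDigit_head_tail i] at hi
  exact ⟨y, rfl, (prependDigit_mem_codings_iff (hf _).isInducing).1 hi⟩

theorem mem_of_mem_codings_s12 {S : Set ℝ} (hS : IsClosed S) (h0 : 0 ∈ S)
    (hmaps : ∀ a, Set.MapsTo (f a) S S) {i : ℕ → Fin 4} {x : ℝ} (hi : i ∈ codings f x) :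
    x ∈ S := by
  have approx_mem (n : ℕ) : ∀ i, codingApprox f i n ∈ S := by
    induction n with
    | zero => exact fun _ => h0
    | succ n ih => exact fun i => hmaps (i 0) (ih _)
  exact hS.mem_of_tendsto hi (.of_forall fun n => approx_mem n i)

theorem mem_image_head_of_mem_codings_s12 (hf : ∀ a, IsClosedEmbedding (f a)) {S : Set ℝ}
    (hS : IsClosed S) (h0 : 0 ∈ S) (hmaps : ∀ a, Set.MapsTo (f a) S S) {i : ℕ → Fin 4} {x : ℝ}
    (hi : i ∈ codings f x) : x ∈ f (i 0) '' S := by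
  obtain ⟨y, hyx, hy⟩ := exists_tail_mem_codings hf hi
  exact ⟨y, mem_of_mem_codings_s12 hS h0 hmaps hy, hyx⟩

theorem exists_encard_codings_eq_and_head_ne_of_apply_ne (hf : ∀ a, IsClosedEmbedding (f a))
    {n : ℕ} {x : ℝ} {i j : ℕ → Fin 4} (hi : i ∈ codings f x) (hj : j ∈ codings f x)
    (hne : i n ≠ j n) :
    ∃ y, (codings f y).encard = (codings f x).encard ∧
      ∃ k ∈ codings f y, ∃ l ∈ codings f y, k 0 ≠ l 0 := by
  induction n generalizing x i j with
  | zero => exact ⟨x, rfl, i, hi, j, hj, hne⟩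
  | succ n ih =>
    by_cases hhead : ∀ k ∈ codings f x, k 0 = i 0
    · obtain ⟨y, hyx, hiy⟩ := exists_tail_mem_codings hf hi
      obtain ⟨z, hzx, hjz⟩ := exists_tail_mem_codings hf hj
      obtain rfl : z = y := (hf (i 0)).injective <| by rw [hyx, ← hhead j hj, hzx]
      subst hyx
      obtain ⟨y, hcard, hheads⟩ := ih hiy hjz hne
      exact ⟨y, hcard.trans
        (encard_codings_apply_of_forall_head_eq (hf _).isInducing hhead).symm, hheads⟩
    · push Not at hhead
      obtain ⟨k, hk, hki⟩ := hhead
      exact ⟨x, rfl, k, hk, i, hi, hki⟩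

theorem exists_encard_codings_eq_and_head_ne (hf : ∀ a, IsClosedEmbedding (f a)) {x : ℝ}
    (hx : 1 < (codings f x).encard) :
    ∃ y, (codings f y).encard = (codings f x).encard ∧
      ∃ i ∈ codings f y, ∃ j ∈ codings f y, i 0 ≠ j 0 := by
  obtain ⟨i, j, hi, hj, hij⟩ := Set.one_lt_encard_iff.1 hx
  obtain ⟨n, hn⟩ := Function.ne_iff.1 hij
  exact exists_encard_codings_eq_and_head_ne_of_apply_ne hf hi hj hn

end Codings

section OverlapIFS

/-- The iterated function system of the theorem, with contraction ratio `lam`; its only overlap is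
between the maps of index `1` and `2`. -/
noncomputable def overlapIFS (lam : ℝ) : Fin 4 → ℝ → ℝ :=
  ![fun x => lam * x, fun x => lam * x + 2 * lam,
    fun x => lam * x + 3 * lam - lam ^ 2, fun x => lam * x + 1 - lam]

/-- The first-level interval of index `a`, i.e. the image of `[0, 1]` under the `a`-th map; it
contains every point having a coding whose first digit is `a`. -/
def levelOneInterval (lam : ℝ) (a : Fin 4) : Set ℝ :=
  overlapIFS lam a '' Set.Icc 0 1

variable {lam : ℝ}

theorem overlapIFS_apply (a : Fin 4) (x : ℝ) :
    overlapIFS lam a x = lam * x + overlapIFS lam a 0 := by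
  fin_cases a <;> simp [overlapIFS] <;> ring

theorem overlapIFS_one_three_eq_two_zero (w : ℝ) :
    overlapIFS lam 1 (overlapIFS lam 3 w) = overlapIFS lam 2 (overlapIFS lam 0 w) := by
  simp only [overlapIFS, Matrix.cons_val]
  ring

theorem isClosedEmbedding_overlapIFS (h0 : lam ≠ 0) (a : Fin 4) :
    IsClosedEmbedding (overlapIFS lam a) := by
  rw [funext (overlapIFS_apply a)]
  exact (affineHomeomorph lam _ h0).isClosedEmbedding

theorem levelOneInterval_eq_Icc (h0 : 0 < lam) (a : Fin 4) :
    levelOneInterval lam a = Set.Icc (overlapIFS lam a 0) (overlapIFS lam a 0 + lam) := by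
  rw [levelOneInterval, funext (overlapIFS_apply a), Set.image_affine_Icc' h0]
  simp [add_comm]

theorem mapsTo_overlapIFS_Icc (h0 : 0 < lam) (h1 : lam < 1) (hgap : 4 * lam - lam ^ 2 < 1 - lam)
    (a : Fin 4) : Set.MapsTo (overlapIFS lam a) (Set.Icc 0 1) (Set.Icc 0 1) := by
  rw [Set.mapsTo_iff_image_subset, ← levelOneInterval, levelOneInterval_eq_Icc h0]
  apply Set.Icc_subset_Icc <;> fin_cases a <;> simp [overlapIFS] <;> nlinarith

theorem mem_levelOneInterval_head (h0 : 0 < lam) (h1 : lam < 1)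
    (hgap : 4 * lam - lam ^ 2 < 1 - lam) {i : ℕ → Fin 4} {x : ℝ}
    (hi : i ∈ codings (overlapIFS lam) x) : x ∈ levelOneInterval lam (i 0) :=
  mem_image_head_of_mem_codings_s12 (isClosedEmbedding_overlapIFS h0.ne') isClosed_Icc (by simp)
    (mapsTo_overlapIFS_Icc h0 h1 hgap) hi

theorem eq_or_eq_one_two_of_mem_levelOneInterval (h0 : 0 < lam) (h1 : lam < 1)
    (hgap : 4 * lam - lam ^ 2 < 1 - lam) {a b : Fin 4} {x : ℝ}
    (ha : x ∈ levelOneInterval lam a) (hb : x ∈ levelOneInterval lam b) :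
    a = b ∨ a = 1 ∧ b = 2 ∨ a = 2 ∧ b = 1 := by
  have hsq : lam ^ 2 < lam := by nlinarith
  rw [levelOneInterval_eq_Icc h0] at ha hb
  fin_cases a <;> fin_cases b <;> simp [overlapIFS] at ha hb ⊢ <;> linarith

theorem exists_overlapIFS_one_three_eq (h0 : 0 < lam) {x : ℝ} (hx1 : x ∈ levelOneInterval lam 1)
    (hx2 : x ∈ levelOneInterval lam 2) :
    ∃ w ∈ Set.Icc (0 : ℝ) 1, overlapIFS lam 1 (overlapIFS lam 3 w) = x := by
  rw [levelOneInterval_eq_Icc h0] at hx1 hx2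
  have hlower : 3 * lam - lam ^ 2 ≤ x := by simpa [overlapIFS] using hx2.1
  have hupper : x ≤ 2 * lam + lam := by simpa [overlapIFS] using hx1.2
  refine ⟨(x - (3 * lam - lam ^ 2)) / lam ^ 2, ⟨?_, ?_⟩, ?_⟩
  · exact div_nonneg (by linarith) (by positivity)
  · exact (div_le_one (by positivity)).2 (by linarith)
  · simp only [overlapIFS, Matrix.cons_val]
    field_simp
    ring

theorem encard_codings_overlapIFS_apply (h0 : 0 < lam) (h1 : lam < 1)
    (hgap : 4 * lam - lam ^ 2 < 1 - lam) {a : Fin 4} (ha1 : a ≠ 1) (ha2 : a ≠ 2) {w : ℝ}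
    (hw : w ∈ Set.Icc (0 : ℝ) 1) :
    (codings (overlapIFS lam) (overlapIFS lam a w)).encard =
      (codings (overlapIFS lam) w).encard := by
  refine encard_codings_apply_of_forall_head_eq (isClosedEmbedding_overlapIFS h0.ne' a).isInducing
    fun i hi => ?_
  have := eq_or_eq_one_two_of_mem_levelOneInterval h0 h1 hgap
    (mem_levelOneInterval_head h0 h1 hgap hi) (Set.mem_image_of_mem _ hw)
  tauto

theorem encard_codings_eq_add_of_mem_levelOneInterval (h0 : 0 < lam) (h1 : lam < 1)
    (hgap : 4 * lam - lam ^ 2 < 1 - lam) {x : ℝ} (hx1 : x ∈ levelOneInterval lam 1) :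
    (codings (overlapIFS lam) x).encard =
      {i ∈ codings (overlapIFS lam) x | i 0 = 1}.encard +
        {i ∈ codings (overlapIFS lam) x | i 0 = 2}.encard := by
  have head_eq : ∀ i ∈ codings (overlapIFS lam) x, i 0 = 1 ∨ i 0 = 2 := fun i hi => by
    have hx := mem_levelOneInterval_head h0 h1 hgap hi
    have := eq_or_eq_one_two_of_mem_levelOneInterval h0 h1 hgap hx hx1
    tauto
  rw [← Set.encard_union_eq, ← Set.sep_or, Set.sep_eq_self_iff_mem_true.2 head_eq]
  rw [Set.disjoint_left]
  rintro i ⟨-, hi1⟩ ⟨-, hi2⟩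
  exact absurd (hi1.symm.trans hi2) (by decide)

theorem encard_codings_overlapIFS_one_three (h0 : 0 < lam) (h1 : lam < 1)
    (hgap : 4 * lam - lam ^ 2 < 1 - lam) {w : ℝ} (hw : w ∈ Set.Icc (0 : ℝ) 1) :
    (codings (overlapIFS lam) (overlapIFS lam 1 (overlapIFS lam 3 w))).encard =
      2 * (codings (overlapIFS lam) w).encard := by
  have hind a := (isClosedEmbedding_overlapIFS h0.ne' a).isInducing
  have hmem : overlapIFS lam 1 (overlapIFS lam 3 w) ∈ levelOneInterval lam 1 :=
    Set.mem_image_of_mem _ (mapsTo_overlapIFS_Icc h0 h1 hgap 3 hw)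
  rw [encard_codings_eq_add_of_mem_levelOneInterval h0 h1 hgap hmem, two_mul]
  congr 1
  · rw [encard_codings_head_eq (hind 1),
      encard_codings_overlapIFS_apply h0 h1 hgap (by decide) (by decide) hw]
  · rw [overlapIFS_one_three_eq_two_zero, encard_codings_head_eq (hind 2),
      encard_codings_overlapIFS_apply h0 h1 hgap (by decide) (by decide) hw]

theorem mem_levelOneInterval_one_two_of_ne (h0 : 0 < lam) (h1 : lam < 1)
    (hgap : 4 * lam - lam ^ 2 < 1 - lam) {a b : Fin 4} (hab : a ≠ b) {x : ℝ}
    (ha : x ∈ levelOneInterval lam a) (hb : x ∈ levelOneInterval lam b) :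
    x ∈ levelOneInterval lam 1 ∧ x ∈ levelOneInterval lam 2 := by
  rcases eq_or_eq_one_two_of_mem_levelOneInterval h0 h1 hgap ha hb with
    h | ⟨rfl, rfl⟩ | ⟨rfl, rfl⟩
  · exact absurd h hab
  · exact ⟨ha, hb⟩
  · exact ⟨hb, ha⟩

theorem exists_encard_codings_overlapIFS_eq_two_mul (h0 : 0 < lam) (h1 : lam < 1)
    (hgap : 4 * lam - lam ^ 2 < 1 - lam) {x : ℝ} (hx : 1 < (codings (overlapIFS lam) x).encard) :
    ∃ w, (codings (overlapIFS lam) x).encard = 2 * (codings (overlapIFS lam) w).encard := by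
  obtain ⟨y, hcard, i, hi, j, hj, hij⟩ :=
    exists_encard_codings_eq_and_head_ne (isClosedEmbedding_overlapIFS h0.ne') hx
  obtain ⟨hy1, hy2⟩ := mem_levelOneInterval_one_two_of_ne h0 h1 hgap hij
    (mem_levelOneInterval_head h0 h1 hgap hi) (mem_levelOneInterval_head h0 h1 hgap hj)
  obtain ⟨w, hw, rfl⟩ := exists_overlapIFS_one_three_eq h0 hy1 hy2
  exact ⟨w, hcard ▸ encard_codings_overlapIFS_one_three h0 h1 hgap hw⟩

end OverlapIFS

theorem natCast_enat_ne_two_mul_of_odd {n : ℕ} (hn : Odd n) (m : ℕ∞) : (n : ℕ∞) ≠ 2 * m := by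
  intro h
  lift m to ℕ using fun hm => by simp [hm] at h
  exact Nat.not_even_iff_odd.2 hn (even_iff_exists_two_mul.2 ⟨m, mod_cast h⟩)

-- `(5 - √21) / 2` is the smaller root of `t ^ 2 - 5 * t + 1`: below it, the interval of index `2`
-- ends before the interval of index `3` begins.
theorem four_mul_sub_sq_lt_one_sub {lam : ℝ} (hlam : lam < (5 - √21) / 2) :
    4 * lam - lam ^ 2 < 1 - lam := by
  have hsq : √21 ^ 2 = 21 := Real.sq_sqrt (by norm_num)
  nlinarith [Real.sqrt_nonneg 21]

/-- for every `i ≥ 1`, no point of `K` has exactly `2i + 1` codings. -/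
theorem statement12
    (lam : ℝ) (hlam : 0 < lam ∧ lam < (5 - Real.sqrt 21) / 2)
    (f : Fin 4 → ℝ → ℝ)
    (hf : f = ![fun x => lam * x, fun x => lam * x + 2 * lam,
      fun x => lam * x + 3 * lam - lam ^ 2, fun x => lam * x + 1 - lam])
    (K : Set ℝ) (hKne : K.Nonempty) (hKcpt : IsCompact K)
    (hK : K = f 0 '' K ∪ f 1 '' K ∪ f 2 '' K ∪ f 3 '' K)
    (U : ℕ → Set ℝ)
    (hU : ∀ k : ℕ, U k = {x ∈ K | (codings f x).encard = (k : ℕ∞)})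
    (i : ℕ) (hi : 1 ≤ i) :
    U (2 * i + 1) = ∅ := by
  obtain ⟨h0, hlt⟩ := hlam
  have h1 : lam < 1 := by
    have : 3 < √21 := Real.lt_sqrt_of_sq_lt (by norm_num)
    linarith
  obtain rfl : f = overlapIFS lam := hf
  rw [hU, Set.eq_empty_iff_forall_notMem]
  rintro x ⟨-, hx⟩
  have hcard : 1 < (codings (overlapIFS lam) x).encard := by
    rw [hx]
    exact_mod_cast (by omega : 1 < 2 * i + 1)
  obtain ⟨w, hw⟩ :=
    exists_encard_codings_overlapIFS_eq_two_mul h0 h1 (four_mul_sub_sq_lt_one_sub hlt) hcard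
  exact natCast_enat_ne_two_mul_of_odd (odd_two_mul_add_one i) _ (hx.symm.trans hw)
end
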